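/- arXiv:1506.02024 — 2 statements merged into one kernel-verified Lean document; each statement's English description precedes it below -/
import Mathlib

section
/- Let X be a random variable with 0 ≤ X ≤ B̄ almost surely and μ := E[X] > 0, where B̄ > 0, and let F̄(x) = P(X ≥ x) denote its complementary cumulative distribution function. Suppose c ∈ (0,1] satisfies 1 − c = c·ln(B̄/(cμ)). Then sup_{x ∈ [0,B̄]} x·F̄(x) ≥ c·μ. -/
open MeasureTheory

/-!
If `s > 0` bounds `x · P(X ≥ x)` on `[0, B]`, then `P(X ≥ x) ≤ min 1 (s / x)`, and the layer cake
formula gives `E[X] = ∫₀ᴮ P(X ≥ x) dx ≤ s + s · log (B / s)` (`integral_le_of_mul_ccdf_le`).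
The map `s ↦ s + s · log (B / s)` is strictly increasing on `(0, B]`
(`add_mul_log_div_lt`), and the equation defining `c` says that it takes the value `μ` at `c μ`.
So no `s < c μ` can bound `x · P(X ≥ x)`.
-/

/-- The mean of a `[0, B]`-valued random variable, controlled by a bound `s` on `x · P(X ≥ x)`. -/
lemma integral_le_of_mul_ccdf_le {Ω : Type*} [MeasurableSpace Ω]
    (P : Measure Ω) [IsProbabilityMeasure P] (B : ℝ) (X : Ω → ℝ) (hX : Measurable X)
    (hbdd : ∀ᵐ ω ∂P, X ω ∈ Set.Icc 0 B) (s : ℝ) (hs : 0 < s) (hsB : s ≤ B)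
    (h : ∀ x ∈ Set.Icc 0 B, x * P.real {ω | x ≤ X ω} ≤ s) :
    ∫ ω, X ω ∂P ≤ s + s * Real.log (B / s) := by
  have hint : Integrable X P :=
    Integrable.of_mem_Icc 0 B hX.aemeasurable hbdd
  have hanti : Antitone fun t : ℝ => P.real {ω | t ≤ X ω} := fun t u htu =>
    measureReal_mono fun ω (hω : u ≤ X ω) => htu.trans hω
  have hII : ∀ a b : ℝ, IntervalIntegrable (fun t : ℝ => P.real {ω | t ≤ X ω}) volume a b :=
    fun a b => hanti.intervalIntegrable
  rw [hint.integral_eq_integral_Ioc_meas_le (M := B) (hbdd.mono fun ω hω => hω.1)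
    (hbdd.mono fun ω hω => hω.2), ← intervalIntegral.integral_of_le (hs.le.trans hsB),
    ← intervalIntegral.integral_add_adjacent_intervals (hII 0 s) (hII s B)]
  refine add_le_add ?_ ?_
  · calc ∫ t in (0 : ℝ)..s, P.real {ω | t ≤ X ω} ≤ ∫ t in (0 : ℝ)..s, (1 : ℝ) :=
          intervalIntegral.integral_mono_on hs.le (hII 0 s) (by simp)
            fun t _ => measureReal_le_one
      _ = s := by simp
  · have h0 : (0 : ℝ) ∉ Set.uIcc s B := by
      rw [Set.uIcc_of_le hsB]
      exact fun h0 => absurd h0.1 (not_le.mpr hs)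
    calc ∫ t in s..B, P.real {ω | t ≤ X ω} ≤ ∫ t in s..B, s * t⁻¹ := by
          refine intervalIntegral.integral_mono_on hsB (hII s B) ?_ fun t ht => ?_
          · refine (intervalIntegral.intervalIntegrable_inv (fun t ht h => ?_)
              continuousOn_id).const_mul s
            exact h0 (h ▸ ht)
          · have ht0 : 0 < t := hs.trans_le ht.1
            rw [← div_eq_mul_inv, le_div_iff₀ ht0, mul_comm]
            exact h t ⟨ht0.le, ht.2⟩
      _ = s * Real.log (B / s) := by
          rw [intervalIntegral.integral_const_mul, integral_inv h0]

lemma add_mul_log_div_lt {s a B : ℝ} (hs : 0 < s) (hsa : s < a) (haB : a ≤ B) :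
    s + s * Real.log (B / s) < a + a * Real.log (B / a) := by
  have ha : 0 < a := hs.trans hsa
  have hL : 0 ≤ Real.log (B / a) := Real.log_nonneg ((one_le_div ha).mpr haB)
  have hlog : Real.log (B / s) = Real.log (B / a) + Real.log (a / s) := by
    rw [← Real.log_mul (div_pos (ha.trans_le haB) ha).ne' (div_pos ha hs).ne']
    congr 1
    field_simp
  have h1 : Real.log (a / s) < a / s - 1 :=
    Real.log_lt_sub_one_of_pos (div_pos ha hs) ((one_lt_div hs).mpr hsa).ne'
  have h2 : s * Real.log (a / s) < a - s := by
    calc s * Real.log (a / s) < s * (a / s - 1) := mul_lt_mul_of_pos_left h1 hs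
      _ = a - s := by field_simp
  have h3 : s * Real.log (B / a) ≤ a * Real.log (B / a) :=
    mul_le_mul_of_nonneg_right hsa.le hL
  rw [hlog, mul_add]
  linarith

/-- Let `X` be a random variable with `0 ≤ X ≤ B̄` a.s. and `μ = E[X] > 0`, and let
`F̄(x) = P(X ≥ x)`. If `c ∈ (0,1]` satisfies `1 − c = c·ln(B̄/(cμ))`, then
`sup_{x ∈ [0,B̄]} x·F̄(x) ≥ c·μ`. -/
theorem sup_x_ccdf_ge {Ω : Type*} [MeasurableSpace Ω]
    (P : Measure Ω) [IsProbabilityMeasure P]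
    (Bbar : ℝ) (hB : 0 < Bbar)
    (X : Ω → ℝ) (hX : Measurable X)
    (hbdd : ∀ᵐ ω ∂P, X ω ∈ Set.Icc 0 Bbar)
    (mu : ℝ) (hmu : mu = ∫ ω, X ω ∂P) (hmupos : 0 < mu)
    (c : ℝ) (hc : c ∈ Set.Ioc (0 : ℝ) 1)
    (hceq : 1 - c = c * Real.log (Bbar / (c * mu))) :
    c * mu ≤
      sSup ((fun x : ℝ => x * (P {ω | x ≤ X ω}).toReal) '' Set.Icc 0 Bbar) := by
  have hbound : BddAbove ((fun x : ℝ => x * (P {ω | x ≤ X ω}).toReal) '' Set.Icc 0 Bbar) := by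
    refine ⟨Bbar, ?_⟩
    rintro _ ⟨x, hx, rfl⟩
    have h1 : P.real {ω | x ≤ X ω} ≤ 1 := measureReal_le_one
    exact (mul_le_of_le_one_right hx.1 h1).trans hx.2
  by_contra! hlt
  have ha : 0 < c * mu := mul_pos hc.1 hmupos
  have haB : c * mu ≤ Bbar := by
    have hlog : 0 ≤ Real.log (Bbar / (c * mu)) :=
      nonneg_of_mul_nonneg_right (hceq ▸ sub_nonneg.mpr hc.2) hc.1
    rw [Real.log_nonneg_iff (div_pos hB ha)] at hlog
    exact (one_le_div ha).mp hlog
  -- The supremum is not known to be positive, so a positive bound strictly below `c μ` replaces it.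
  obtain ⟨s, hs, hsa⟩ := exists_between (max_lt hlt ha)
  have hs0 : 0 < s := (le_max_right _ _).trans_lt hs
  have hmean := integral_le_of_mul_ccdf_le P Bbar X hX hbdd s hs0 (hsa.le.trans haB)
    fun x hx => (le_csSup hbound ⟨x, hx, rfl⟩).trans ((le_max_left _ _).trans hs.le)
  have hstrict := add_mul_log_div_lt hs0 hsa haB
  have hval : c * mu + c * mu * Real.log (Bbar / (c * mu)) = mu := by
    linear_combination -mu * hceq
  linarith
end

section
/- For every q ∈ (0,1) and every c ∈ (0,1] satisfying 1 − c = c·ln(1/(cq)), one has min{ (1/2)·log₂(e/c), ((5 − 3q)/(4q))·log₂(1/(1−q)) } ≤ 1.8034. -/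
/-!
The two terms are controlled on complementary ranges of `q`, split at `q = 1/4`.

* For `q ≤ 1/4` the second term is at most its limit `5 / (4 ln 2) < 1.8034` as `q → 0`. Indeed
  `y ≤ sinh y` at `y = ln (1/(1-q))` gives `ln (1/(1-q)) ≤ q (2-q) / (2 (1-q))`, and
  `(2-q) (5-3q) ≤ 10 (1-q)` holds for `0 ≤ q ≤ 1/3` (`log_one_div_one_sub_le`).
* For `q ≥ 1/4`, put `L = ln (1/c)`. The equation for `c` reads `1/c = 1 + L + ln (1/q)`, and the
  tangent line of `ln` at `4` gives `L ≤ 1/(4c) + ln 4 - 1`. Together with `ln (1/q) ≤ ln 4` this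
  yields `3 L ≤ 10 ln 2 - 3`, so the first term `(1 + L) / (2 ln 2)` is at most `5/3`
  (`one_sub_log_le`).
-/

/-- The factor `5 - 3q` clears the denominator of the bound `ln (1/(1-q)) ≤ 5q / (5-3q)`, whose two
sides agree up to `O(q²)`. -/
lemma log_one_div_one_sub_le {q : ℝ} (h0 : 0 < q) (h1 : q ≤ 1 / 4) :
    (5 - 3 * q) * Real.log (1 / (1 - q)) ≤ 5 * q := by
  have hp : 0 < 1 - q := by linarith
  have hs : 0 < 1 / (1 - q) := by positivity
  have hl : 0 ≤ Real.log (1 / (1 - q)) := by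
    apply Real.log_nonneg
    rw [le_div_iff₀ hp]
    linarith
  have h := Real.self_le_sinh_iff.2 hl
  rw [Real.sinh_log hs] at h
  have h2 : (1 / (1 - q) - (1 / (1 - q))⁻¹) / 2 = q * (2 - q) / (2 * (1 - q)) := by
    field_simp
    ring
  rw [h2] at h
  calc (5 - 3 * q) * Real.log (1 / (1 - q))
      ≤ (5 - 3 * q) * (q * (2 - q) / (2 * (1 - q))) :=
        mul_le_mul_of_nonneg_left h (by linarith)
    _ = (5 - 3 * q) * (q * (2 - q)) / (2 * (1 - q)) := by ring
    _ ≤ 5 * q := by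
        rw [div_le_iff₀ (by positivity)]
        nlinarith [mul_nonneg (mul_pos h0 h0).le (by linarith : 0 ≤ 1 - 3 * q)]

/-- Here `1 - ln c = ln (e/c)`. -/
lemma one_sub_log_le {q c : ℝ} (hq : 1 / 4 ≤ q) (hc : 0 < c)
    (h : 1 - c = c * Real.log (1 / (c * q))) :
    1 - Real.log c ≤ 10 / 3 * Real.log 2 := by
  have hq0 : 0 < q := by linarith
  have h4 : Real.log 4 = 2 * Real.log 2 := by
    rw [show (4 : ℝ) = 2 ^ 2 by norm_num, Real.log_pow]
    norm_num
  have hlq : -Real.log q ≤ 2 * Real.log 2 := by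
    have := Real.log_le_log (by norm_num) hq
    rw [one_div, Real.log_inv, h4] at this
    linarith
  rw [one_div, Real.log_inv, Real.log_mul hc.ne' hq0.ne'] at h
  have ht : 1 / c = 1 - Real.log c - Real.log q := by
    field_simp
    linarith
  -- tangent line of `ln` at `4`, evaluated at `1 / c`
  have htan := Real.log_le_sub_one_of_pos (show 0 < 1 / c / 4 by positivity)
  rw [Real.log_div (by positivity) (by norm_num), h4, one_div, Real.log_inv, ← one_div, ht] at htan
  linarith

/-- For every `q ∈ (0,1)` and every `c ∈ (0,1]` satisfying `1 − c = c·ln(1/(cq))`,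
`min{(1/2)·log₂(e/c), ((5 − 3q)/(4q))·log₂(1/(1−q))} ≤ 1.8034`. -/
theorem min_gap_le :
    ∀ q ∈ Set.Ioo (0 : ℝ) 1, ∀ c ∈ Set.Ioc (0 : ℝ) 1,
      1 - c = c * Real.log (1 / (c * q)) →
      min ((1 / 2) * Real.logb 2 (Real.exp 1 / c))
          (((5 - 3 * q) / (4 * q)) * Real.logb 2 (1 / (1 - q)))
        ≤ 1.8034 := by
  intro q hq c hc h
  obtain ⟨hq0, -⟩ := hq
  obtain ⟨hc0, -⟩ := hc
  have hlog := Real.log_two_gt_d9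
  have hlog0 : 0 < Real.log 2 := by linarith
  rcases le_total q (1 / 4) with hq4 | hq4
  · refine (min_le_right _ _).trans ?_
    have key := log_one_div_one_sub_le hq0 hq4
    rw [Real.logb, div_mul_div_comm, div_le_iff₀ (by positivity)]
    nlinarith [mul_pos hq0 (by linarith : 0 < Real.log 2 - 0.69314)]
  · refine (min_le_left _ _).trans ?_
    have key := one_sub_log_le hq4 hc0 h
    rw [Real.logb, Real.log_div (Real.exp_pos 1).ne' hc0.ne', Real.log_exp, div_mul_div_comm,
      div_le_iff₀ (by positivity)]
    linarith
end
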